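/- arXiv:quant-ph/0412157 — 2 statements merged into one kernel-verified Lean document; each statement's English description precedes it below -/
import Mathlib

section
/- Let ρ and σ be density operators on a finite-dimensional Hilbert space with supp ρ ≤ supp σ, and for ε ∈ (0,1) define β_{ε,n} = min{ log tr(σ^{⊗n} q) : q an orthogonal projection on H^{⊗n} with tr(ρ^{⊗n} q) ≥ 1 − ε }. Then lim_{n→∞} (1/n) β_{ε,n} = −S(ρ,σ), where S(ρ,σ) = tr ρ(log ρ − log σ) is the quantum relative entropy (base-2 logarithm). (Quantum Stein's lemma.) -/
open Filter
open scoped ComplexOrder Classical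

/-- `n`-fold tensor power of a `d×d` matrix, realized on the index set `Fin n → Fin d`. -/
noncomputable def tpow {d : ℕ} (ρ : Matrix (Fin d) (Fin d) ℂ) (n : ℕ) :
    Matrix (Fin n → Fin d) (Fin n → Fin d) ℂ :=
  Matrix.of fun x y => ∏ i, ρ (x i) (y i)

/-- Base-2 functional calculus logarithm of a Hermitian matrix, with the convention
`log 0 = 0` on the kernel (and junk value `0` on non-Hermitian matrices). -/
noncomputable def matLog2 {m : Type*} [Fintype m] [DecidableEq m]
    (ρ : Matrix m m ℂ) : Matrix m m ℂ :=
  if h : ρ.IsHermitian then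
    (h.eigenvectorUnitary : Matrix m m ℂ) *
      Matrix.diagonal (fun i => (Real.logb 2 (h.eigenvalues i) : ℂ)) *
      (star (h.eigenvectorUnitary : Matrix m m ℂ))
  else 0

/-- Quantum relative entropy `S(ρ,σ) = tr ρ (log ρ − log σ)` (base 2); this real-valued
formula is meaningful when `supp ρ ≤ supp σ`. -/
noncomputable def qRelEnt {m : Type*} [Fintype m] [DecidableEq m]
    (ρ σ : Matrix m m ℂ) : ℝ :=
  ((ρ * (matLog2 ρ - matLog2 σ)).trace).re

/-- Support condition `supp ρ ≤ supp σ` (for PSD matrices: `ker σ ⊆ ker ρ`). -/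
def SuppLe {m : Type*} [Fintype m] (ρ σ : Matrix m m ℂ) : Prop :=
  ∀ v, σ.mulVec v = 0 → ρ.mulVec v = 0

/-- Quantum relative entropy with value `⊤` when `supp ρ ≤ supp σ` fails. -/
noncomputable def qRelEntE {m : Type*} [Fintype m] [DecidableEq m]
    (ρ σ : Matrix m m ℂ) : EReal :=
  if SuppLe ρ σ then ((qRelEnt ρ σ : ℝ) : EReal) else ⊤

/-- Von Neumann entropy (base 2). -/
noncomputable def vNent {m : Type*} [Fintype m] [DecidableEq m]
    (ρ : Matrix m m ℂ) : ℝ :=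
  if h : ρ.IsHermitian then -∑ i, (h.eigenvalues i) * Real.logb 2 (h.eigenvalues i) else 0

/-- Density operator. -/
def IsDensity {m : Type*} [Fintype m] (ρ : Matrix m m ℂ) : Prop :=
  ρ.PosSemidef ∧ ρ.trace = 1

/-- Orthogonal projection. -/
def IsProjn {m : Type*} [Fintype m] (p : Matrix m m ℂ) : Prop :=
  p.IsHermitian ∧ p * p = p

/-- Base-2 logarithm with value `⊥` at nonpositive reals. -/
noncomputable def elog2 (t : ℝ) : EReal := if t ≤ 0 then ⊥ else ((Real.logb 2 t : ℝ) : EReal)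

section HilbertSchmidt

variable {ι : Type*} [Fintype ι]

/-- The Hilbert–Schmidt norm of a square matrix. -/
noncomputable def hsNorm (M : Matrix ι ι ℂ) : ℝ :=
  ‖(WithLp.toLp 2 (fun p : ι × ι => M p.1 p.2) : EuclideanSpace ℂ (ι × ι))‖

lemma hsNorm_nonneg (M : Matrix ι ι ℂ) : 0 ≤ hsNorm M := norm_nonneg _

lemma hsNorm_add_le (A B : Matrix ι ι ℂ) : hsNorm (A + B) ≤ hsNorm A + hsNorm B :=
  norm_add_le (WithLp.toLp 2 (fun p : ι × ι => A p.1 p.2) : EuclideanSpace ℂ (ι × ι))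
    (WithLp.toLp 2 (fun p : ι × ι => B p.1 p.2))

lemma hsNorm_sq (M : Matrix ι ι ℂ) : hsNorm M ^ 2 = ((M.conjTranspose * M).trace).re := by
  unfold hsNorm
  rw [EuclideanSpace.norm_sq_eq, Fintype.sum_prod_type_right]
  simp only [Matrix.trace, Matrix.diag, Matrix.mul_apply, Complex.re_sum,
    Matrix.conjTranspose_apply]
  refine Finset.sum_congr rfl fun i _ => Finset.sum_congr rfl fun j _ => ?_
  rw [Complex.star_def, ← Complex.normSq_eq_conj_mul_self, Complex.ofReal_re,
    Complex.normSq_eq_norm_sq]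

lemma hsNorm_projn_mul_sq {p : Matrix ι ι ℂ} (hp : IsProjn p) (Y : Matrix ι ι ℂ) :
    hsNorm (p * Y) ^ 2 = ((Y.conjTranspose * p * Y).trace).re := by
  rw [hsNorm_sq, Matrix.conjTranspose_mul, hp.1.eq]
  congr 2
  rw [← mul_assoc, mul_assoc _ p p, hp.2]

lemma hsNorm_projn_mul_sq_eq_trace {p R : Matrix ι ι ℂ} (hp : IsProjn p) (hR : R.IsHermitian) :
    hsNorm (p * R) ^ 2 = ((R * R * p).trace).re := by
  rw [hsNorm_projn_mul_sq hp, hR.eq, Matrix.trace_mul_comm, ← mul_assoc]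

lemma IsProjn.posSemidef {p : Matrix ι ι ℂ} (hp : IsProjn p) : p.PosSemidef := by
  have := Matrix.posSemidef_conjTranspose_mul_self p
  rwa [hp.1.eq, hp.2] at this

variable [DecidableEq ι]

lemma IsProjn.one_sub {p : Matrix ι ι ℂ} (hp : IsProjn p) : IsProjn (1 - p) := by
  refine ⟨Matrix.isHermitian_one.sub hp.1, ?_⟩
  rw [sub_mul, mul_sub, mul_sub, hp.2]
  simp

lemma hsNorm_projn_mul_le {p : Matrix ι ι ℂ} (hp : IsProjn p) (Y : Matrix ι ι ℂ) :
    hsNorm (p * Y) ≤ hsNorm Y := by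
  refine le_of_sq_le_sq ?_ (hsNorm_nonneg Y)
  have h1 := hsNorm_projn_mul_sq hp Y
  have h2 := hsNorm_projn_mul_sq hp.one_sub Y
  have h3 := hsNorm_sq Y
  have h4 := sq_nonneg (hsNorm ((1 - p) * Y))
  rw [mul_sub Y.conjTranspose, sub_mul (Y.conjTranspose * 1), mul_one, Matrix.trace_sub,
    Complex.sub_re, ← h3, ← h1] at h2
  linarith

/-- The matrix with real spectral weights `w` in the basis given by the columns of `W`. -/
noncomputable def specMat (W : Matrix ι ι ℂ) (w : ι → ℝ) : Matrix ι ι ℂ :=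
  W * Matrix.diagonal (fun x => (w x : ℂ)) * W.conjTranspose

lemma specMat_isHermitian (W : Matrix ι ι ℂ) (w : ι → ℝ) : (specMat W w).IsHermitian := by
  unfold specMat
  refine Matrix.isHermitian_mul_mul_conjTranspose W ?_
  rw [Matrix.isHermitian_diagonal_iff]
  intro i
  simp [IsSelfAdjoint]

lemma specMat_mul {W : Matrix ι ι ℂ} (hW : W.conjTranspose * W = 1) (v w : ι → ℝ) :
    specMat W v * specMat W w = specMat W (fun x => v x * w x) := by
  unfold specMat
  simp only [mul_assoc]
  rw [← mul_assoc W.conjTranspose W, hW, one_mul, ← mul_assoc (Matrix.diagonal _)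
    (Matrix.diagonal _), Matrix.diagonal_mul_diagonal]
  simp

lemma re_trace_specMat_mul (W : Matrix ι ι ℂ) (w : ι → ℝ) (M : Matrix ι ι ℂ) :
    ((specMat W w * M).trace).re = ∑ x, w x * ((W.conjTranspose * M * W) x x).re := by
  unfold specMat
  rw [mul_assoc, mul_assoc, Matrix.trace_mul_comm, mul_assoc]
  simp [Matrix.trace, Matrix.diagonal_mul, mul_assoc]

lemma re_trace_specMat_mul_le {W : Matrix ι ι ℂ} {v w : ι → ℝ} (h : ∀ x, v x ≤ w x)
    {M : Matrix ι ι ℂ} (hM : M.PosSemidef) :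
    ((specMat W v * M).trace).re ≤ ((specMat W w * M).trace).re := by
  rw [re_trace_specMat_mul, re_trace_specMat_mul]
  exact Finset.sum_le_sum fun x _ => mul_le_mul_of_nonneg_right (h x)
    (Complex.nonneg_iff.1 (hM.conjTranspose_mul_mul_same W).diag_nonneg).1

lemma specMat_const {W : Matrix ι ι ℂ} (hW : W.conjTranspose * W = 1) (c : ℝ) :
    specMat W (fun _ => c) = (c : ℂ) • 1 := by
  unfold specMat
  rw [← Matrix.smul_one_eq_diagonal, Matrix.mul_smul, Matrix.smul_mul, mul_one,
    mul_eq_one_comm.1 hW]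

lemma specMat_const_mul (W : Matrix ι ι ℂ) (c : ℝ) (w : ι → ℝ) :
    specMat W (fun x => c * w x) = (c : ℂ) • specMat W w := by
  unfold specMat
  rw [← Matrix.smul_mul, ← Matrix.mul_smul, ← Matrix.diagonal_smul]
  congr 3
  ext x
  simp

/-- The orthogonal projection onto the span of the columns of `W` indexed by `T`. -/
noncomputable def specProj (W : Matrix ι ι ℂ) (T : Finset ι) : Matrix ι ι ℂ :=
  specMat W (fun x => if x ∈ T then 1 else 0)

lemma specProj_isProjn {W : Matrix ι ι ℂ} (hW : W.conjTranspose * W = 1) (T : Finset ι) :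
    IsProjn (specProj W T) := by
  refine ⟨specMat_isHermitian _ _, ?_⟩
  unfold specProj
  rw [specMat_mul hW]
  congr 1
  ext x
  split_ifs <;> simp

lemma rank_specProj_le (W : Matrix ι ι ℂ) (T : Finset ι) : (specProj W T).rank ≤ T.card := by
  unfold specProj specMat
  refine (Matrix.rank_mul_le_left _ _).trans ((Matrix.rank_mul_le_right _ _).trans ?_)
  rw [Matrix.rank_diagonal, Fintype.card_subtype]
  exact Finset.card_le_card fun x hx => by simpa using hx

/-- Every Hermitian matrix has a range projection whose trace is the rank. -/
lemma Matrix.IsHermitian.exists_rangeProjn {A : Matrix ι ι ℂ} (hA : A.IsHermitian) :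
    ∃ q B : Matrix ι ι ℂ, IsProjn q ∧ q * A = A ∧ q = A * B ∧ (q.trace).re = A.rank := by
  obtain ⟨V, w, hV, hAs, hr⟩ : ∃ (V : Matrix ι ι ℂ) (w : ι → ℝ), V.conjTranspose * V = 1 ∧
      A = specMat V w ∧ A.rank = Fintype.card {i // w i ≠ 0} := by
    refine ⟨hA.eigenvectorUnitary, hA.eigenvalues, ?_, ?_, hA.rank_eq_card_non_zero_eigs⟩
    · simpa [Matrix.star_eq_conjTranspose] using Unitary.coe_star_mul_self hA.eigenvectorUnitary
    · conv_lhs => rw [hA.spectral_theorem]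
      rw [Unitary.conjStarAlgAut_apply]
      rfl
  refine ⟨specProj V {x | w x ≠ 0}, specMat V (fun x => (w x)⁻¹),
    specProj_isProjn hV _, ?_, ?_, ?_⟩
  · rw [hAs, specProj, specMat_mul hV]
    congr 1
    ext x
    by_cases h : w x = 0 <;> simp [h]
  · rw [hAs, specProj, specMat_mul hV]
    congr 1
    ext x
    by_cases h : w x = 0 <;> simp [h]
  · rw [hr, specProj, ← mul_one (specMat _ _), re_trace_specMat_mul, mul_one, hV,
      Fintype.card_subtype, Finset.card_filter]
    simp

end HilbertSchmidt

section OneShot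

variable {ι : Type*} [Fintype ι] [DecidableEq ι]

lemma re_trace_specMat_const_mul {W : Matrix ι ι ℂ} (hW : W.conjTranspose * W = 1) (c : ℝ)
    (M : Matrix ι ι ℂ) : ((specMat W (fun _ => c) * M).trace).re = c * (M.trace).re := by
  rw [specMat_const hW, Matrix.smul_mul, one_mul, Matrix.trace_smul, smul_eq_mul,
    Complex.re_ofReal_mul]

/-- One-shot converse: a test accepting the state `R * R` has a lower bound on its weight under
`specMat W s` in terms of spectral projections of the two states. -/
lemma oneShot_converse {U W : Matrix ι ι ℂ} (hU : U.conjTranspose * U = 1)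
    (hW : W.conjTranspose * W = 1) {l s : ι → ℝ} (hs : ∀ x, 0 ≤ s x)
    {R : Matrix ι ι ℂ} (hR : R.IsHermitian) (hRl : R * R = specMat U l)
    {T T' : Finset ι} {L S κ : ℝ} (hL : 0 ≤ L) (hS : 0 ≤ S) (hκ : 0 ≤ κ)
    (hT : ∀ x ∈ T, l x ≤ L) (hT' : ∀ x ∈ T', S ≤ s x)
    {q : Matrix ι ι ℂ} (hq : IsProjn q)
    (h : κ + hsNorm ((1 - specProj U T) * R) + hsNorm ((1 - specProj W T') * R) ≤
      hsNorm (q * R)) :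
    S * κ ^ 2 ≤ L * ((specMat W s * q).trace).re := by
  have hP := specProj_isProjn hU T
  have hQ := specProj_isProjn hW T'
  set P := specProj U T with hPdef
  set Q := specProj W T' with hQdef
  have hκ1 : κ ≤ hsNorm (q * (Q * P * R)) := by
    have e : q * R = q * (Q * P * R) + q * (Q * ((1 - P) * R)) + q * ((1 - Q) * R) := by
      noncomm_ring
    have h1 := hsNorm_add_le (q * (Q * P * R) + q * (Q * ((1 - P) * R))) (q * ((1 - Q) * R))
    have h2 := hsNorm_add_le (q * (Q * P * R)) (q * (Q * ((1 - P) * R)))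
    have h3 := hsNorm_projn_mul_le hq (Q * ((1 - P) * R))
    have h4 := hsNorm_projn_mul_le hQ ((1 - P) * R)
    have h5 := hsNorm_projn_mul_le hq ((1 - Q) * R)
    rw [← e] at h1
    linarith
  have hκ2 : κ ^ 2 ≤ hsNorm (q * (Q * P * R)) ^ 2 := pow_le_pow_left₀ hκ hκ1 2
  have hM : (Q * q * Q).PosSemidef := by
    have := hq.posSemidef.conjTranspose_mul_mul_same Q
    rwa [hQ.1.eq] at this
  have hPRP : P * (R * R) * P = specMat U (fun x => if x ∈ T then l x else 0) := by
    rw [hPdef, hRl, specProj, specMat_mul hU, specMat_mul hU]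
    congr 1
    ext x
    split_ifs <;> simp
  have h1 : hsNorm (q * (Q * P * R)) ^ 2 =
      ((specMat U (fun x => if x ∈ T then l x else 0) * (Q * q * Q)).trace).re := by
    rw [hsNorm_projn_mul_sq hq, ← hPRP]
    simp only [Matrix.conjTranspose_mul, hR.eq, hP.1.eq, hQ.1.eq]
    rw [show R * (P * Q) * q * (Q * P * R) = R * (P * (Q * q * Q) * P * R) by
      simp only [mul_assoc], Matrix.trace_mul_comm,
      show P * (Q * q * Q) * P * R * R = P * ((Q * q * Q) * P * R * R) by
      simp only [mul_assoc], Matrix.trace_mul_comm,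
      show Q * q * Q * P * R * R * P = (Q * q * Q) * (P * (R * R) * P) by
      simp only [mul_assoc], Matrix.trace_mul_comm]
  have h2 : ((specMat U (fun x => if x ∈ T then l x else 0) * (Q * q * Q)).trace).re ≤
      L * ((Q * q * Q).trace).re := by
    rw [← re_trace_specMat_const_mul hU]
    refine re_trace_specMat_mul_le (fun x => ?_) hM
    split_ifs with hx
    exacts [hT x hx, hL]
  have h3 : ((Q * q * Q).trace).re = ((Q * q).trace).re := by
    rw [Matrix.trace_mul_comm, ← mul_assoc, hQ.2]
  have h4 : S * ((Q * q).trace).re ≤ ((specMat W s * q).trace).re := by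
    rw [← Complex.re_ofReal_mul, ← smul_eq_mul, ← Matrix.trace_smul, ← Matrix.smul_mul, hQdef,
      specProj, ← specMat_const_mul]
    refine re_trace_specMat_mul_le (fun x => ?_) hq.posSemidef
    split_ifs with hx
    · simpa using hT' x hx
    · simpa using hs x
  calc S * κ ^ 2 ≤ S * (L * ((Q * q).trace).re) := by
        refine mul_le_mul_of_nonneg_left ?_ hS
        rw [← h3]
        linarith
    _ = L * (S * ((Q * q).trace).re) := by ring
    _ ≤ _ := mul_le_mul_of_nonneg_left h4 hL

/-- One-shot achievability: the range projection of `Q * P`, for spectral projections `P`, `Q`,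
is a good test. -/
lemma oneShot_achievability {U W : Matrix ι ι ℂ} (hU : U.conjTranspose * U = 1)
    (hW : W.conjTranspose * W = 1) {s : ι → ℝ} (R : Matrix ι ι ℂ)
    {T T' : Finset ι} {S : ℝ} (hS : 0 ≤ S) (hT' : ∀ x ∈ T', s x ≤ S) :
    ∃ q : Matrix ι ι ℂ, IsProjn q ∧
      hsNorm ((1 - q) * R) ≤
        hsNorm ((1 - specProj U T) * R) + hsNorm ((1 - specProj W T') * R) ∧
      ((specMat W s * q).trace).re ≤ S * T.card := by
  have hP := specProj_isProjn hU T
  have hQ := specProj_isProjn hW T'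
  have hrank := rank_specProj_le U T
  set P := specProj U T with hPdef
  set Q := specProj W T' with hQdef
  have hA : (Q * P * Q).IsHermitian := by
    have := Matrix.isHermitian_mul_mul_conjTranspose Q hP.1
    rwa [hQ.1.eq] at this
  obtain ⟨q, B, hq, hqA, hqB, hqt⟩ := hA.exists_rangeProjn
  have hQq : Q * q = q := by
    rw [hqB]
    simp only [← mul_assoc, hQ.2]
  have hqQP : (1 - q) * (Q * P) = 0 := by
    rw [← Matrix.self_mul_conjTranspose_eq_zero]
    simp only [Matrix.conjTranspose_mul, hP.1.eq, hQ.1.eq, hq.one_sub.1.eq]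
    rw [show (1 - q) * (Q * P) * (P * Q * (1 - q)) = (1 - q) * (Q * (P * P) * Q) * (1 - q) by
      simp only [mul_assoc], hP.2, sub_mul, hqA]
    simp
  refine ⟨q, hq, ?_, ?_⟩
  · have e : (1 - q) * R = (1 - q) * (Q * ((1 - P) * R)) + (1 - q) * ((1 - Q) * R) := by
      have : (1 - q) * (Q * ((1 - P) * R)) =
          (1 - q) * (Q * R) - (1 - q) * (Q * P) * R := by noncomm_ring
      rw [this, hqQP]
      noncomm_ring
    have h1 := hsNorm_add_le ((1 - q) * (Q * ((1 - P) * R))) ((1 - q) * ((1 - Q) * R))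
    have h3 := hsNorm_projn_mul_le hq.one_sub (Q * ((1 - P) * R))
    have h4 := hsNorm_projn_mul_le hQ ((1 - P) * R)
    have h5 := hsNorm_projn_mul_le hq.one_sub ((1 - Q) * R)
    rw [← e] at h1
    linarith
  · have h1 : ((specMat W s * q).trace).re ≤ S * (q.trace).re := by
      rw [← re_trace_specMat_const_mul hW, ← hQq, ← mul_assoc, hQdef, specProj, specMat_mul hW,
        ← specProj, ← hQdef, hQq]
      conv_rhs => rw [← hQq, ← mul_assoc, hQdef, specProj, specMat_mul hW]
      refine re_trace_specMat_mul_le (fun x => ?_) hq.posSemidef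
      split_ifs with hx
      · simpa using hT' x hx
      · simp
    refine h1.trans (mul_le_mul_of_nonneg_left ?_ hS)
    rw [hqt]
    exact_mod_cast ((Matrix.rank_mul_le_left _ _).trans
      (Matrix.rank_mul_le_right _ _)).trans hrank

end OneShot

section TypicalSet

variable {d : ℕ}

lemma sum_prod_eq_prod_sum {R : Type*} [CommSemiring R] (n : ℕ) (f : Fin n → Fin d → R) :
    ∑ x : Fin n → Fin d, ∏ i, f i (x i) = ∏ i, ∑ j, f i j := by
  rw [Finset.prod_univ_sum, Fintype.piFinset_univ]

lemma sum_fin_cons (n : ℕ) (F : (Fin (n + 1) → Fin d) → ℝ) :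
    ∑ x, F x = ∑ a : Fin d, ∑ y : Fin n → Fin d, F (Fin.cons a y) := by
  rw [← Fintype.sum_prod_type']
  exact (Fintype.sum_equiv (Fin.consEquiv fun _ : Fin (n + 1) => Fin d) _ _ fun _ => rfl).symm

variable {p : Fin d → ℝ}

lemma sum_prod_weights (hp1 : ∑ i, p i = 1) (n : ℕ) : ∑ x : Fin n → Fin d, ∏ i, p (x i) = 1 := by
  rw [sum_prod_eq_prod_sum n fun _ => p]
  simp [hp1]

lemma sum_prod_weights_mul_sum (hp1 : ∑ i, p i = 1)
    {g : Fin d → ℝ} (hg : ∑ i, p i * g i = 0) (n : ℕ) :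
    ∑ x : Fin n → Fin d, (∏ i, p (x i)) * ∑ i, g (x i) = 0 := by
  induction n with
  | zero => simp
  | succ n ih =>
    rw [sum_fin_cons]
    simp only [Fin.prod_univ_succ, Fin.sum_univ_succ, Fin.cons_zero, Fin.cons_succ]
    have h : ∀ a : Fin d, ∑ y : Fin n → Fin d,
        p a * (∏ i, p (y i)) * (g a + ∑ i, g (y i)) = p a * g a := by
      intro a
      calc _ = p a * g a * ∑ y : Fin n → Fin d, ∏ i, p (y i) +
            p a * ∑ y : Fin n → Fin d, (∏ i, p (y i)) * ∑ i, g (y i) := by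
            rw [Finset.mul_sum, Finset.mul_sum, ← Finset.sum_add_distrib]
            exact Finset.sum_congr rfl fun y _ => by ring
        _ = _ := by rw [ih, sum_prod_weights hp1]; ring
    simp only [h, hg]

lemma sum_prod_weights_mul_sum_sq (hp1 : ∑ i, p i = 1)
    {g : Fin d → ℝ} (hg : ∑ i, p i * g i = 0) (n : ℕ) :
    ∑ x : Fin n → Fin d, (∏ i, p (x i)) * (∑ i, g (x i)) ^ 2 = n * ∑ i, p i * g i ^ 2 := by
  induction n with
  | zero => simp
  | succ n ih =>
    rw [sum_fin_cons]
    simp only [Fin.prod_univ_succ, Fin.sum_univ_succ, Fin.cons_zero, Fin.cons_succ]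
    have h : ∀ a : Fin d, ∑ y : Fin n → Fin d,
        p a * (∏ i, p (y i)) * (g a + ∑ i, g (y i)) ^ 2 =
          p a * g a ^ 2 + p a * (n * ∑ i, p i * g i ^ 2) := by
      intro a
      calc _ = p a * g a ^ 2 * ∑ y : Fin n → Fin d, ∏ i, p (y i) +
            2 * p a * g a * (∑ y : Fin n → Fin d, (∏ i, p (y i)) * ∑ i, g (y i)) +
            p a * ∑ y : Fin n → Fin d, (∏ i, p (y i)) * (∑ i, g (y i)) ^ 2 := by
            rw [Finset.mul_sum, Finset.mul_sum, Finset.mul_sum, ← Finset.sum_add_distrib,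
              ← Finset.sum_add_distrib]
            exact Finset.sum_congr rfl fun y _ => by ring
        _ = _ := by
            rw [ih, sum_prod_weights hp1, sum_prod_weights_mul_sum hp1 hg]; ring
    simp only [h, Finset.sum_add_distrib, ← Finset.sum_mul, hp1]
    push_cast
    ring

/-- Weak law of large numbers in the form of typical sets: `a`-typical sequences have
`p`-probability tending to one, and the product of the `a`-values on them is controlled. -/
lemma exists_typicalSet (hp1 : ∑ i, p i = 1) (hp : ∀ i, 0 ≤ p i)
    {a : Fin d → ℝ} (ha : ∀ i, 0 ≤ a i) (hpa : ∀ i, a i = 0 → p i = 0) {δ : ℝ} (hδ : 0 < δ) :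
    ∃ T : (n : ℕ) → Finset (Fin n → Fin d),
      Tendsto (fun n => 1 - ∑ x ∈ T n, ∏ i, p (x i)) atTop (nhds 0) ∧
      ∀ n, ∀ x ∈ T n,
        (2 : ℝ) ^ (n * ((∑ i, p i * Real.logb 2 (a i)) - δ)) ≤ ∏ i, a (x i) ∧
        ∏ i, a (x i) ≤ (2 : ℝ) ^ (n * ((∑ i, p i * Real.logb 2 (a i)) + δ)) := by
  set E := ∑ i, p i * Real.logb 2 (a i) with hE
  set g : Fin d → ℝ := fun i => Real.logb 2 (a i) - E with hgdef
  have hg : ∑ i, p i * g i = 0 := by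
    simp only [hgdef, mul_sub, Finset.sum_sub_distrib, ← Finset.sum_mul, hp1]
    linarith
  refine ⟨fun n => {x | (∀ i, a (x i) ≠ 0) ∧ |∑ i, g (x i)| ≤ n * δ}, ?_, ?_⟩
  · set V := ∑ i, p i * g i ^ 2
    have hprod : ∀ n (x : Fin n → Fin d), 0 ≤ ∏ i, p (x i) :=
      fun n x => Finset.prod_nonneg fun i _ => hp _
    have hlim : Tendsto (fun n : ℕ => V / δ ^ 2 * (1 / (n : ℝ))) atTop (nhds 0) := by
      simpa using (tendsto_one_div_atTop_nhds_zero_nat (𝕜 := ℝ)).const_mul (V / δ ^ 2)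
    refine squeeze_zero' (Eventually.of_forall fun n => ?_) ?_ hlim
    · rw [sub_nonneg, ← sum_prod_weights hp1 n]
      exact Finset.sum_le_sum_of_subset_of_nonneg (Finset.subset_univ _)
        fun x _ _ => hprod n x
    · filter_upwards [eventually_gt_atTop 0] with n hn
      have hn' : (0 : ℝ) < n := by exact_mod_cast hn
      rw [← sum_prod_weights hp1 n, Finset.sum_filter, ← Finset.sum_sub_distrib]
      have hb : ∀ x : Fin n → Fin d, (∏ i, p (x i)) -
          (if (∀ i, a (x i) ≠ 0) ∧ |∑ i, g (x i)| ≤ n * δ then ∏ i, p (x i) else 0) ≤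
          ((∏ i, p (x i)) * (∑ i, g (x i)) ^ 2) * (1 / (n * δ) ^ 2) := by
        intro x
        have h0 : 0 ≤ ((∏ i, p (x i)) * (∑ i, g (x i)) ^ 2) * (1 / (n * δ) ^ 2) :=
          mul_nonneg (mul_nonneg (hprod n x) (sq_nonneg _)) (by positivity)
        split_ifs with h
        · simpa using h0
        · rw [not_and_or] at h
          rcases h with h | h
          · push Not at h
            obtain ⟨i, hi⟩ := h
            have : ∏ i, p (x i) = 0 := Finset.prod_eq_zero (Finset.mem_univ i) (hpa _ hi)
            simp [this]
          · rw [not_le] at h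
            have h2 : (n * δ) ^ 2 ≤ (∑ i, g (x i)) ^ 2 := by
              rw [← sq_abs (∑ i, g (x i))]
              exact pow_le_pow_left₀ (by positivity) h.le 2
            have h3 : 1 ≤ (∑ i, g (x i)) ^ 2 * (1 / (n * δ) ^ 2) := by
              rw [mul_one_div, one_le_div (by positivity)]
              exact h2
            rw [sub_zero, mul_assoc]
            exact le_mul_of_one_le_right (hprod n x) h3
      refine (Finset.sum_le_sum fun x _ => hb x).trans (le_of_eq ?_)
      rw [← Finset.sum_mul, sum_prod_weights_mul_sum_sq hp1 hg]
      field_simp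
      rw [sum_prod_weights hp1, mul_one]
  · intro n x hx
    rw [Finset.mem_filter] at hx
    obtain ⟨-, hx0, hxg⟩ := hx
    have hprod : ∏ i, a (x i) = (2 : ℝ) ^ (n * E + ∑ i, g (x i)) := by
      have : n * E + ∑ i, g (x i) = ∑ i, Real.logb 2 (a (x i)) := by
        simp [hgdef, Finset.sum_sub_distrib]
      rw [this, Real.rpow_sum_of_pos (by norm_num)]
      refine Finset.prod_congr rfl fun i _ => ?_
      rw [Real.rpow_logb (by norm_num) (by norm_num) ((ha _).lt_of_ne' (hx0 i))]
    rw [abs_le] at hxg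
    rw [hprod]
    constructor <;> refine Real.rpow_le_rpow_of_exponent_le (by norm_num) ?_ <;> nlinarith

end TypicalSet

section TensorPower

variable {d : ℕ}

lemma tpow_mul (A B : Matrix (Fin d) (Fin d) ℂ) (n : ℕ) :
    tpow (A * B) n = tpow A n * tpow B n := by
  ext x y
  simp only [tpow, Matrix.of_apply, Matrix.mul_apply, ← Finset.prod_mul_distrib]
  exact (sum_prod_eq_prod_sum n fun i j => A (x i) j * B j (y i)).symm

lemma tpow_conjTranspose (A : Matrix (Fin d) (Fin d) ℂ) (n : ℕ) :
    tpow A.conjTranspose n = (tpow A n).conjTranspose := by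
  ext x y
  simp [tpow, Matrix.conjTranspose_apply]

lemma tpow_diagonal (w : Fin d → ℂ) (n : ℕ) :
    tpow (Matrix.diagonal w) n = Matrix.diagonal (fun x : Fin n → Fin d => ∏ i, w (x i)) := by
  ext x y
  simp only [tpow, Matrix.of_apply, Matrix.diagonal_apply]
  split_ifs with h
  · simp [h]
  · obtain ⟨i, hi⟩ := Function.ne_iff.1 h
    exact Finset.prod_eq_zero (Finset.mem_univ i) (if_neg hi)

lemma tpow_one (n : ℕ) : tpow (1 : Matrix (Fin d) (Fin d) ℂ) n = 1 := by
  rw [← Matrix.diagonal_one, tpow_diagonal]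
  simp

lemma tpow_isometry {U : Matrix (Fin d) (Fin d) ℂ} (hU : U.conjTranspose * U = 1) (n : ℕ) :
    (tpow U n).conjTranspose * tpow U n = 1 := by
  rw [← tpow_conjTranspose, ← tpow_mul, hU, tpow_one]

lemma tpow_specMat (U : Matrix (Fin d) (Fin d) ℂ) (w : Fin d → ℝ) (n : ℕ) :
    tpow (specMat U w) n = specMat (tpow U n) (fun x => ∏ i, w (x i)) := by
  unfold specMat
  rw [tpow_mul, tpow_mul, tpow_diagonal, tpow_conjTranspose]
  simp

lemma trace_tpow (A : Matrix (Fin d) (Fin d) ℂ) (n : ℕ) : (tpow A n).trace = A.trace ^ n := by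
  simp only [Matrix.trace, Matrix.diag, tpow, Matrix.of_apply]
  rw [sum_prod_eq_prod_sum n fun _ j => A j j]
  simp

/-- The outcome distribution of measuring `ρ` in the basis given by the columns of `W`. -/
noncomputable def outcomeProb (ρ W : Matrix (Fin d) (Fin d) ℂ) (i : Fin d) : ℝ :=
  ((W.conjTranspose * ρ * W) i i).re

variable {ρ W : Matrix (Fin d) (Fin d) ℂ}

lemma outcomeProb_nonneg (hρ : ρ.PosSemidef) (i : Fin d) : 0 ≤ outcomeProb ρ W i :=
  (Complex.nonneg_iff.1 (hρ.conjTranspose_mul_mul_same W).diag_nonneg).1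

lemma ofReal_outcomeProb (hρ : ρ.PosSemidef) (i : Fin d) :
    (outcomeProb ρ W i : ℂ) = (W.conjTranspose * ρ * W) i i := by
  have := (Complex.nonneg_iff.1 ((hρ.conjTranspose_mul_mul_same W).diag_nonneg (i := i))).2
  exact Complex.ext rfl (by simpa using this)

lemma sum_outcomeProb (hW : W.conjTranspose * W = 1) (hρ : IsDensity ρ) :
    ∑ i, outcomeProb ρ W i = 1 := by
  have h : (W.conjTranspose * ρ * W).trace = 1 := by
    rw [Matrix.trace_mul_comm, ← mul_assoc, mul_eq_one_comm.1 hW, one_mul, hρ.2]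
  simpa [Matrix.trace, outcomeProb] using congrArg Complex.re h

lemma outcomeProb_specMat (hW : W.conjTranspose * W = 1) (w : Fin d → ℝ) :
    outcomeProb (specMat W w) W = w := by
  ext i
  unfold outcomeProb specMat
  rw [show W.conjTranspose * (W * Matrix.diagonal (fun x => (w x : ℂ)) * W.conjTranspose) * W =
    (W.conjTranspose * W) * Matrix.diagonal (fun x => (w x : ℂ)) * (W.conjTranspose * W) by
    simp only [mul_assoc], hW]
  simp

lemma re_trace_mul_specMat (w : Fin d → ℝ) :
    ((ρ * specMat W w).trace).re = ∑ i, outcomeProb ρ W i * w i := by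
  rw [Matrix.trace_mul_comm, re_trace_specMat_mul]
  simp [outcomeProb, mul_comm]

lemma re_trace_tpow_mul_specProj (hρ : ρ.PosSemidef) (n : ℕ) (T : Finset (Fin n → Fin d)) :
    ((tpow ρ n * specProj (tpow W n) T).trace).re = ∑ x ∈ T, ∏ i, outcomeProb ρ W (x i) := by
  rw [Matrix.trace_mul_comm, specProj, re_trace_specMat_mul, ← tpow_conjTranspose, ← tpow_mul,
    ← tpow_mul]
  simp only [tpow, Matrix.of_apply, ← ofReal_outcomeProb hρ, ← Complex.ofReal_prod,
    Complex.ofReal_re]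
  simp

lemma outcomeProb_eq_zero {s : Fin d → ℝ} (hW : W.conjTranspose * W = 1)
    (h : SuppLe ρ (specMat W s)) {i : Fin d} (hi : s i = 0) : outcomeProb ρ W i = 0 := by
  have h1 : (specMat W s).mulVec (W.mulVec (Pi.single i 1)) = 0 := by
    rw [Matrix.mulVec_mulVec, specMat, mul_assoc, hW, mul_one, ← Matrix.mulVec_mulVec]
    simp [hi]
  have h2 : (W.conjTranspose * ρ * W).mulVec (Pi.single i 1) = 0 := by
    rw [← Matrix.mulVec_mulVec, ← Matrix.mulVec_mulVec, h _ h1, Matrix.mulVec_zero]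
  have h3 := congrFun h2 i
  rw [Matrix.mulVec_single_one] at h3
  simpa [outcomeProb] using congrArg Complex.re h3

lemma hsNorm_one_sub_specProj_tendsto (hW : W.conjTranspose * W = 1) (hρ : IsDensity ρ)
    {R : (n : ℕ) → Matrix (Fin n → Fin d) (Fin n → Fin d) ℂ} (hR : ∀ n, (R n).IsHermitian)
    (hRρ : ∀ n, R n * R n = tpow ρ n) {T : (n : ℕ) → Finset (Fin n → Fin d)}
    (hT : Tendsto (fun n => 1 - ∑ x ∈ T n, ∏ i, outcomeProb ρ W (x i)) atTop (nhds 0)) :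
    Tendsto (fun n => hsNorm ((1 - specProj (tpow W n) (T n)) * R n)) atTop (nhds 0) := by
  have h : ∀ n, hsNorm ((1 - specProj (tpow W n) (T n)) * R n) =
      √(1 - ∑ x ∈ T n, ∏ i, outcomeProb ρ W (x i)) := by
    intro n
    rw [← Real.sqrt_sq (hsNorm_nonneg _), hsNorm_projn_mul_sq_eq_trace
      (specProj_isProjn (tpow_isometry hW n) _).one_sub (hR n), hRρ, mul_sub, mul_one,
      Matrix.trace_sub, Complex.sub_re, re_trace_tpow_mul_specProj hρ.1, trace_tpow, hρ.2]
    simp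
  simp only [h]
  simpa [Function.comp_def] using (Real.continuous_sqrt.tendsto 0).comp hT

lemma IsDensity.exists_specMat (hρ : IsDensity ρ) :
    ∃ (U : Matrix (Fin d) (Fin d) ℂ) (l : Fin d → ℝ), U.conjTranspose * U = 1 ∧
      (∀ i, 0 ≤ l i) ∧ ρ = specMat U l ∧ matLog2 ρ = specMat U (fun i => Real.logb 2 (l i)) := by
  have hH : ρ.IsHermitian := hρ.1.isHermitian
  refine ⟨hH.eigenvectorUnitary, hH.eigenvalues, ?_, hρ.1.eigenvalues_nonneg, ?_, ?_⟩
  · simpa [Matrix.star_eq_conjTranspose] using Unitary.coe_star_mul_self hH.eigenvectorUnitary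
  · conv_lhs => rw [hH.spectral_theorem]
    rw [Unitary.conjStarAlgAut_apply]
    rfl
  · rw [matLog2, dif_pos hH]
    rfl

end TensorPower

/-- Both halves of Stein's lemma for tests, up to an arbitrary error `δ` in the exponent. -/
lemma stein_bounds {d : ℕ} {ρ σ : Matrix (Fin d) (Fin d) ℂ}
    (hρ : IsDensity ρ) (hσ : IsDensity σ) (hsupp : SuppLe ρ σ)
    {ε : ℝ} (hε0 : 0 < ε) (hε1 : ε < 1) {δ : ℝ} (hδ : 0 < δ) :
    ∃ c : ℝ, 0 < c ∧ ∀ᶠ n : ℕ in atTop,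
      (∀ q : Matrix (Fin n → Fin d) (Fin n → Fin d) ℂ, IsProjn q →
        1 - ε ≤ ((tpow ρ n * q).trace).re →
        c * (2 : ℝ) ^ (n * (-(qRelEnt ρ σ) - δ)) ≤ ((tpow σ n * q).trace).re) ∧
      ∃ q : Matrix (Fin n → Fin d) (Fin n → Fin d) ℂ, IsProjn q ∧
        1 - ε ≤ ((tpow ρ n * q).trace).re ∧
        ((tpow σ n * q).trace).re ≤ (2 : ℝ) ^ (n * (-(qRelEnt ρ σ) + δ)) := by
  obtain ⟨U, l, hU, hl, hρU, hlogρ⟩ := hρ.exists_specMat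
  obtain ⟨W, s, hW, hs, hσW, hlogσ⟩ := hσ.exists_specMat
  have hpU : outcomeProb ρ U = l := by rw [hρU, outcomeProb_specMat hU]
  have hl1 : ∑ i, l i = 1 := by rw [← hpU, sum_outcomeProb hU hρ]
  obtain ⟨T, hT1, hT⟩ := exists_typicalSet hl1 hl hl (fun _ => id) (half_pos hδ)
  obtain ⟨T', hT1', hT'⟩ := exists_typicalSet (sum_outcomeProb hW hρ) (outcomeProb_nonneg hρ.1) hs
    (fun i hi => outcomeProb_eq_zero hW (hσW ▸ hsupp) hi) (half_pos hδ)
  set E₁ := ∑ i, l i * Real.logb 2 (l i) with hE₁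
  set E₂ := ∑ i, outcomeProb ρ W i * Real.logb 2 (s i) with hE₂
  have hS : -(qRelEnt ρ σ) = E₂ - E₁ := by
    rw [qRelEnt, hlogρ, hlogσ, mul_sub, Matrix.trace_sub, Complex.sub_re, re_trace_mul_specMat,
      re_trace_mul_specMat, hpU]
    ring
  set R : (n : ℕ) → Matrix (Fin n → Fin d) (Fin n → Fin d) ℂ :=
    fun n => specMat (tpow U n) (fun x => √(∏ i, l (x i))) with hRdef
  have hlprod : ∀ n (x : Fin n → Fin d), 0 ≤ ∏ i, l (x i) :=
    fun n x => Finset.prod_nonneg fun i _ => hl _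
  have hsprod : ∀ n (x : Fin n → Fin d), 0 ≤ ∏ i, s (x i) :=
    fun n x => Finset.prod_nonneg fun i _ => hs _
  have hR : ∀ n, (R n).IsHermitian := fun n => specMat_isHermitian _ _
  have hRl : ∀ n, R n * R n = specMat (tpow U n) (fun x => ∏ i, l (x i)) := by
    intro n
    rw [hRdef, specMat_mul (tpow_isometry hU n)]
    simp only [Real.mul_self_sqrt (hlprod n _)]
  have hRρ : ∀ n, R n * R n = tpow ρ n := by
    intro n
    rw [hRl, hρU, tpow_specMat]
  have hσn : ∀ n, tpow σ n = specMat (tpow W n) (fun x => ∏ i, s (x i)) := by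
    intro n
    rw [hσW, tpow_specMat]
  have hlim := (hsNorm_one_sub_specProj_tendsto hU hρ hR hRρ (hpU ▸ hT1)).add
    (hsNorm_one_sub_specProj_tendsto hW hρ hR hRρ hT1')
  rw [add_zero] at hlim
  have hε : 0 < √(1 - ε) / 2 := half_pos (Real.sqrt_pos.2 (by linarith))
  refine ⟨(√(1 - ε) / 2) ^ 2, by positivity, ?_⟩
  filter_upwards [hlim.eventually_le_const hε, hlim.eventually_le_const (Real.sqrt_pos.2 hε0)]
    with n hn1 hn2
  rw [hσn, hS, ← hRρ]
  constructor
  · intro q hq hqε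
    rw [← hsNorm_projn_mul_sq_eq_trace hq (hR n)] at hqε
    have h1 : √(1 - ε) ≤ hsNorm (q * R n) := Real.sqrt_le_iff.2 ⟨hsNorm_nonneg _, hqε⟩
    have h2 := oneShot_converse (tpow_isometry hU n) (tpow_isometry hW n) (hsprod n) (hR n)
      (hRl n) (T := T n) (T' := T' n) (L := 2 ^ (n * (E₁ + δ / 2)))
      (S := 2 ^ (n * (E₂ - δ / 2))) (by positivity) (by positivity) hε.le
      (fun x hx => (hT n x hx).2) (fun x hx => (hT' n x hx).1) hq (by linarith)
    have h3 : (2 : ℝ) ^ (n * (E₂ - δ / 2)) =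
        2 ^ (n * (E₁ + δ / 2)) * 2 ^ (n * (E₂ - E₁ - δ)) := by
      rw [← Real.rpow_add (by norm_num)]
      congr 1
      ring
    rw [h3, mul_assoc] at h2
    have h4 := le_of_mul_le_mul_left h2 (by positivity)
    linarith
  · obtain ⟨q, hq, hqR, hqS⟩ := oneShot_achievability (tpow_isometry hU n) (tpow_isometry hW n)
      (R n) (T := T n) (T' := T' n) (S := 2 ^ (n * (E₂ + δ / 2))) (by positivity)
      (fun x hx => (hT' n x hx).2)
    refine ⟨q, hq, ?_, hqS.trans ?_⟩
    · have h1 : hsNorm ((1 - q) * R n) ^ 2 ≤ ε := by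
        rw [← Real.sq_sqrt hε0.le]
        exact pow_le_pow_left₀ (hsNorm_nonneg _) (hqR.trans hn2) 2
      rw [hsNorm_projn_mul_sq_eq_trace hq.one_sub (hR n), mul_sub, mul_one, Matrix.trace_sub,
        Complex.sub_re] at h1
      have h2 : ((R n * R n).trace).re = 1 := by simp [hRρ, trace_tpow, hρ.2]
      linarith
    · have h1 : (T n).card * (2 : ℝ) ^ (n * (E₁ - δ / 2)) ≤ 1 := by
        rw [← sum_prod_weights hl1 n, ← nsmul_eq_mul]
        exact (Finset.card_nsmul_le_sum _ _ _ fun x hx => (hT n x hx).1).trans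
          (Finset.sum_le_sum_of_subset_of_nonneg (Finset.subset_univ _) fun x _ _ => hlprod n x)
      have h3 : (2 : ℝ) ^ (n * (E₂ + δ / 2)) =
          2 ^ (n * (E₂ - E₁ + δ)) * 2 ^ (n * (E₁ - δ / 2)) := by
        rw [← Real.rpow_add (by norm_num)]
        congr 1
        ring
      rw [h3, mul_assoc, mul_comm _ ((T n).card : ℝ)]
      exact mul_le_of_le_one_right (by positivity) h1

/-- Quantum Stein's lemma: `(1/n) β_{ε,n}(ρ^{⊗n}, σ^{⊗n}) → −S(ρ,σ)` for every `ε ∈ (0,1)`,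
where `β_{ε,n}` is the minimal `log tr(σ^{⊗n} q)` over projections `q` with
`tr(ρ^{⊗n} q) ≥ 1 − ε`. -/
theorem quantum_stein_lemma (d : ℕ) (ρ σ : Matrix (Fin d) (Fin d) ℂ)
    (hρ : IsDensity ρ) (hσ : IsDensity σ) (hsupp : SuppLe ρ σ)
    (ε : ℝ) (hε0 : 0 < ε) (hε1 : ε < 1) :
    Tendsto (fun n : ℕ =>
        (sInf {x : ℝ | ∃ q : Matrix (Fin n → Fin d) (Fin n → Fin d) ℂ, IsProjn q ∧
            1 - ε ≤ ((tpow ρ n * q).trace).re ∧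
            x = Real.logb 2 (((tpow σ n * q).trace).re)}) / n)
      atTop (nhds (-(qRelEnt ρ σ))) := by
  rw [Metric.tendsto_atTop]
  intro η hη
  obtain ⟨c, hc, hev⟩ := stein_bounds hρ hσ hsupp hε0 hε1 (δ := η / 3) (by positivity)
  have hlog : Tendsto (fun n : ℕ => Real.logb 2 c * (1 / (n : ℝ))) atTop (nhds 0) := by
    simpa using (tendsto_one_div_atTop_nhds_zero_nat (𝕜 := ℝ)).const_mul (Real.logb 2 c)
  rw [← eventually_atTop]
  filter_upwards [hev, eventually_gt_atTop 0,
    hlog.eventually_const_le (show -(η / 3) < 0 by linarith)] with n ⟨hlow, q, hq, hqε, hqσ⟩ hn hcn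
  have hn' : (0 : ℝ) < n := by exact_mod_cast hn
  set D := -(qRelEnt ρ σ)
  set X := {x : ℝ | ∃ q : Matrix (Fin n → Fin d) (Fin n → Fin d) ℂ, IsProjn q ∧
    1 - ε ≤ ((tpow ρ n * q).trace).re ∧ x = Real.logb 2 (((tpow σ n * q).trace).re)}
  have hpos : ∀ t : ℝ, 0 < c * (2 : ℝ) ^ t := fun t => mul_pos hc (by positivity)
  have hlb : ∀ x ∈ X, Real.logb 2 c + n * (D - η / 3) ≤ x := by
    rintro x ⟨q, hq, hqε, rfl⟩
    have h := Real.logb_le_logb_of_le (b := 2) (by norm_num) (hpos _) (hlow q hq hqε)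
    rwa [Real.logb_mul hc.ne' (by positivity), Real.logb_rpow (by norm_num) (by norm_num)] at h
  have hmem : Real.logb 2 (((tpow σ n * q).trace).re) ∈ X := ⟨q, hq, hqε, rfl⟩
  have h1 : Real.logb 2 c + n * (D - η / 3) ≤ sInf X := le_csInf ⟨_, hmem⟩ hlb
  have h2 : sInf X ≤ n * (D + η / 3) := by
    refine (csInf_le ⟨_, hlb⟩ hmem).trans ?_
    have h := Real.logb_le_logb_of_le (b := 2) (by norm_num)
      ((hpos _).trans_le (hlow q hq hqε)) hqσ
    rwa [Real.logb_rpow (by norm_num) (by norm_num)] at h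
  rw [mul_one_div, le_div_iff₀ hn'] at hcn
  rw [Real.dist_eq, abs_lt, lt_sub_iff_add_lt, sub_lt_iff_lt_add, lt_div_iff₀ hn', div_lt_iff₀ hn']
  have := mul_pos hη hn'
  constructor <;> linarith
end

section
/- Let A be a finite-dimensional C*-algebra and B ⊆ A a subalgebra containing the identity. For states ψ, φ on A, the relative entropy satisfies S(ψ↾B, φ↾B) ≤ S(ψ, φ) (monotonicity of relative entropy under restriction to a subalgebra). -/
open Filter
open scoped ComplexOrder Classical

open Matrix in
/-- A real-diagonal matrix conjugated by `U`; it is the functional calculus when `U`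
diagonalizes. -/
noncomputable def unitaryDiag {n : Type*} [Fintype n] [DecidableEq n]
    (U : Matrix n n ℂ) (r : n → ℝ) : Matrix n n ℂ :=
  U * diagonal (fun i => (r i : ℂ)) * Uᴴ

open Matrix in
/-- The functional whose supremum over `X` is the resolvent form of the relative modular
operator of `ρ` and `σ` (Kosaki's variational expression). -/
noncomputable def kosakiForm {n : Type*} [Fintype n]
    (ρ σ : Matrix n n ℂ) (t : ℝ) (X : Matrix n n ℂ) : ℝ :=
  2 * (ρ * X).trace.re - (σ * (X * Xᴴ)).trace.re - t * (ρ * (Xᴴ * X)).trace.re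

open Matrix in
/-- The squared overlaps between the columns of `U` and those of `V`. -/
noncomputable def overlap {n : Type*} [Fintype n] (U V : Matrix n n ℂ) (j i : n) : ℝ :=
  Complex.normSq ((Vᴴ * U) j i)

/-- The supremum of `kosakiForm` in terms of eigenvalues and overlaps. -/
noncomputable def kosakiSup {n : Type*} [Fintype n] (U V : Matrix n n ℂ) (r s : n → ℝ)
    (t : ℝ) : ℝ :=
  ∑ j, ∑ i, overlap U V j i * (r i ^ 2 / (s j + t * r i))

section
open Matrix

variable {n : Type*} [Fintype n]

theorem conjTranspose_mul_self_apply_re (Y : Matrix n n ℂ) (i : n) :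
    ((Yᴴ * Y) i i).re = ∑ j, Complex.normSq (Y j i) := by
  simp [mul_apply, Complex.normSq_apply]

theorem mul_conjTranspose_self_apply_re (Y : Matrix n n ℂ) (j : n) :
    ((Y * Yᴴ) j j).re = ∑ i, Complex.normSq (Y j i) := by
  simp [mul_apply, Complex.normSq_apply]

theorem overlap_mul_cases {U V : Matrix n n ℂ} {r s : n → ℝ} (hr : ∀ i, 0 ≤ r i)
    (hs : ∀ i, 0 ≤ s i) (h : ∀ j i, s j = 0 → r i * overlap U V j i = 0) (j i : n) :
    overlap U V j i = 0 ∨ r i = 0 ∨ (0 < s j ∧ 0 < r i) := by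
  rcases (hs j).eq_or_lt with hj | hj
  · rcases mul_eq_zero.mp (h j i hj.symm) with h | h <;> simp [h]
  · rcases (hr i).eq_or_lt with hi | hi
    · simp [← hi]
    · simp [hi, hj]

theorem SuppLe.mul_eq_zero {ρ σ P : Matrix n n ℂ} (h : SuppLe ρ σ) (hP : σ * P = 0) :
    ρ * P = 0 := by
  ext i j
  have := h (P.col j) (by
    ext i
    simpa [mul_apply, mulVec, dotProduct] using congrFun (congrFun hP i) j)
  simpa [mul_apply, mulVec, dotProduct] using congrFun this i

/-- The relative entropy (natural logarithm) in terms of eigenvalues and overlaps. -/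
noncomputable def overlapEnt (U V : Matrix n n ℂ) (r s : n → ℝ) : ℝ :=
  ∑ j, ∑ i, overlap U V j i * (r i * (Real.log (r i) - Real.log (s j)))

/-- A regularization of `overlapEnt`, the primitive of `kosakiSup`. -/
noncomputable def kosakiPrim (U V : Matrix n n ℂ) (r s : n → ℝ) (t : ℝ) : ℝ :=
  ∑ j, ∑ i, overlap U V j i * (r i * (Real.log (s j + t * r i) - Real.log (s j)))

theorem hasDerivAt_kosakiPrim {U V : Matrix n n ℂ} {r s : n → ℝ} (hr : ∀ i, 0 ≤ r i)
    (hs : ∀ i, 0 ≤ s i) (h : ∀ j i, s j = 0 → r i * overlap U V j i = 0) {t : ℝ} (ht : 0 ≤ t) :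
    HasDerivAt (kosakiPrim U V r s) (kosakiSup U V r s t) t := by
  refine HasDerivAt.fun_sum fun j _ => HasDerivAt.fun_sum fun i _ => ?_
  rcases overlap_mul_cases hr hs h j i with h | h | ⟨h1, h2⟩
  · simpa [h] using hasDerivAt_const t (0 : ℝ)
  · simpa [h] using hasDerivAt_const t (0 : ℝ)
  · have hp : s j + t * r i ≠ 0 := by positivity
    have := (((((hasDerivAt_id t).mul_const (r i)).const_add (s j)).log hp).sub_const
      (Real.log (s j))).const_mul (r i) |>.const_mul (overlap U V j i)
    refine this.congr_deriv ?_
    simp only [id_eq, one_mul]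
    ring

theorem tendsto_kosakiPrim {U V : Matrix n n ℂ} {r s : n → ℝ} (hr : ∀ i, 0 ≤ r i)
    (hs : ∀ i, 0 ≤ s i) (h : ∀ j i, s j = 0 → r i * overlap U V j i = 0)
    (h1 : ∑ j, ∑ i, overlap U V j i * r i = 1) :
    Tendsto (fun t => kosakiPrim U V r s t - Real.log t) atTop (nhds (overlapEnt U V r s)) := by
  have key : ∀ t, kosakiPrim U V r s t - Real.log t = ∑ j, ∑ i,
      overlap U V j i * (r i * (Real.log (s j + t * r i) - Real.log t - Real.log (s j))) := by
    intro t
    have e : Real.log t = ∑ j, ∑ i, overlap U V j i * r i * Real.log t := by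
      simp only [← Finset.sum_mul, h1, one_mul]
    conv_lhs => rw [kosakiPrim, e]
    simp only [← Finset.sum_sub_distrib]
    refine Finset.sum_congr rfl fun j _ => Finset.sum_congr rfl fun i _ => ?_
    ring
  simp only [key]
  refine tendsto_finsetSum _ fun j _ => tendsto_finsetSum _ fun i _ => ?_
  rcases overlap_mul_cases hr hs h j i with h | h | ⟨h2, h3⟩
  · simp [h]
  · simp [h]
  · refine ((Tendsto.sub_const ?_ _).const_mul _).const_mul _
    have : Tendsto (fun t : ℝ => Real.log (s j / t + r i)) atTop (nhds (Real.log (r i))) := by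
      have := ((tendsto_const_nhds (x := s j)).div_atTop tendsto_id).add_const (r i)
      rw [zero_add] at this
      exact this.log h3.ne'
    refine this.congr' ?_
    filter_upwards [eventually_gt_atTop 0] with t ht
    rw [← Real.log_div (by positivity) ht.ne']
    congr 1
    field_simp

theorem overlapEnt_le {U V U₀ V₀ : Matrix n n ℂ} {r s r₀ s₀ : n → ℝ}
    (hr : ∀ i, 0 ≤ r i) (hs : ∀ i, 0 ≤ s i) (hr₀ : ∀ i, 0 ≤ r₀ i) (hs₀ : ∀ i, 0 ≤ s₀ i)
    (h : ∀ j i, s j = 0 → r i * overlap U V j i = 0)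
    (h₀ : ∀ j i, s₀ j = 0 → r₀ i * overlap U₀ V₀ j i = 0)
    (h1 : ∑ j, ∑ i, overlap U V j i * r i = 1)
    (h1₀ : ∑ j, ∑ i, overlap U₀ V₀ j i * r₀ i = 1)
    (hle : ∀ t, 0 < t → kosakiSup U₀ V₀ r₀ s₀ t ≤ kosakiSup U V r s t) :
    overlapEnt U₀ V₀ r₀ s₀ ≤ overlapEnt U V r s := by
  have hd : ∀ t, 0 ≤ t → HasDerivAt (fun t => kosakiPrim U V r s t - kosakiPrim U₀ V₀ r₀ s₀ t)
      (kosakiSup U V r s t - kosakiSup U₀ V₀ r₀ s₀ t) t := fun t ht =>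
    (hasDerivAt_kosakiPrim hr hs h ht).sub (hasDerivAt_kosakiPrim hr₀ hs₀ h₀ ht)
  have hmono : MonotoneOn (fun t => kosakiPrim U V r s t - kosakiPrim U₀ V₀ r₀ s₀ t)
      (Set.Ici 0) := by
    refine monotoneOn_of_deriv_nonneg (convex_Ici 0)
      (fun t ht => (hd t ht).continuousAt.continuousWithinAt) ?_ ?_
    · intro t ht
      exact (hd t (interior_subset ht)).differentiableAt.differentiableWithinAt
    · intro t ht
      rw [(hd t (interior_subset ht)).deriv]
      rw [interior_Ici] at ht
      exact sub_nonneg.mpr (hle t ht)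
  refine le_of_tendsto_of_tendsto (tendsto_kosakiPrim hr₀ hs₀ h₀ h1₀)
    (tendsto_kosakiPrim hr hs h h1) ?_
  filter_upwards [eventually_ge_atTop 0] with t ht
  have := hmono (Set.mem_Ici.mpr le_rfl) (Set.mem_Ici.mpr ht) ht
  simp [kosakiPrim] at this ⊢
  linarith

variable [DecidableEq n]

theorem trace_diagonal_mul_re (r : n → ℝ) (M : Matrix n n ℂ) :
    (diagonal (fun i => (r i : ℂ)) * M).trace.re = ∑ i, r i * (M i i).re := by
  simp [trace, diagonal_mul]

theorem trace_unitaryDiag_mul (U : Matrix n n ℂ) (r : n → ℝ) (X : Matrix n n ℂ) :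
    (unitaryDiag U r * X).trace.re = ∑ i, r i * ((Uᴴ * X * U) i i).re := by
  rw [← trace_diagonal_mul_re, unitaryDiag, Matrix.mul_assoc, Matrix.mul_assoc, trace_mul_comm]
  simp only [Matrix.mul_assoc]

theorem kosakiForm_eq {U V : Matrix n n ℂ} (hU : Uᴴ * U = 1) (hV : Vᴴ * V = 1)
    (r s : n → ℝ) (t : ℝ) (Y : Matrix n n ℂ) :
    kosakiForm (unitaryDiag U r) (unitaryDiag V s) t (V * Y * Uᴴ) =
      ∑ j, ∑ i, (2 * r i * (star ((Vᴴ * U) j i) * Y j i).re -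
        (s j + t * r i) * Complex.normSq (Y j i)) := by
  have h1 : Uᴴ * (V * Y * Uᴴ) * U = (Vᴴ * U)ᴴ * Y := by
    simp [Matrix.mul_assoc, hU]
  have h2 : Vᴴ * (V * Y * Uᴴ * (V * Y * Uᴴ)ᴴ) * V = Y * Yᴴ := by
    calc _ = (Vᴴ * V) * Y * (Uᴴ * U) * Yᴴ * (Vᴴ * V) := by simp [Matrix.mul_assoc]
      _ = _ := by simp [hU, hV]
  have h3 : Uᴴ * ((V * Y * Uᴴ)ᴴ * (V * Y * Uᴴ)) * U = Yᴴ * Y := by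
    calc _ = (Uᴴ * U) * Yᴴ * (Vᴴ * V) * Y * (Uᴴ * U) := by simp [Matrix.mul_assoc]
      _ = _ := by simp [hU, hV]
  rw [kosakiForm, trace_unitaryDiag_mul, trace_unitaryDiag_mul, trace_unitaryDiag_mul, h1, h2, h3]
  simp only [conjTranspose_mul_self_apply_re, mul_conjTranspose_self_apply_re]
  have h4 : ∀ i, (((Vᴴ * U)ᴴ * Y) i i).re = ∑ j, (star ((Vᴴ * U) j i) * Y j i).re := by
    intro i
    rw [mul_apply, Complex.re_sum]
    rfl
  simp only [h4, Finset.mul_sum]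
  rw [Finset.sum_comm, Finset.sum_comm (f := fun i j => t * (r i * Complex.normSq (Y j i)))]
  simp only [← Finset.sum_sub_distrib]
  refine Finset.sum_congr rfl fun j _ => Finset.sum_congr rfl fun i _ => ?_
  ring

theorem quadratic_le {w y : ℂ} {r a : ℝ} (ha : 0 ≤ a) (har : a = 0 → r = 0) :
    2 * r * (star w * y).re - a * Complex.normSq y ≤ Complex.normSq w * (r ^ 2 / a) := by
  rcases ha.eq_or_lt with h | h
  · simp [har h.symm, ← h]
  · have : Complex.normSq w * (r ^ 2 / a) - (2 * r * (star w * y).re - a * Complex.normSq y) =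
        ((r * w.re - a * y.re) ^ 2 + (r * w.im - a * y.im) ^ 2) / a := by
      simp [Complex.normSq_apply]
      field_simp
      ring
    have h2 : 0 ≤ ((r * w.re - a * y.re) ^ 2 + (r * w.im - a * y.im) ^ 2) / a := by positivity
    linarith

theorem quadratic_eq {w : ℂ} {r a : ℝ} (har : a = 0 → r = 0) :
    2 * r * (star w * (((r / a : ℝ) : ℂ) * w)).re - a * Complex.normSq (((r / a : ℝ) : ℂ) * w) =
      Complex.normSq w * (r ^ 2 / a) := by
  rcases eq_or_ne a 0 with h | h
  · simp [har h, h]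
  · have e : star w * (((r / a : ℝ) : ℂ) * w) = ((r / a * Complex.normSq w : ℝ) : ℂ) := by
      rw [Complex.ofReal_mul, Complex.normSq_eq_conj_mul_self]
      simp only [Complex.star_def]
      ring
    rw [e, Complex.ofReal_re, Complex.normSq_mul, Complex.normSq_ofReal]
    field_simp
    ring

theorem add_mul_eq_zero_right {r s t : ℝ} (hr : 0 ≤ r) (hs : 0 ≤ s) (ht : 0 < t)
    (h : s + t * r = 0) : r = 0 := by
  have := mul_nonneg ht.le hr
  have h2 : t * r = 0 := by linarith
  exact (mul_eq_zero.mp h2).resolve_left ht.ne'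

theorem kosakiForm_le_kosakiSup {U V : Matrix n n ℂ} (hU : Uᴴ * U = 1) (hV : Vᴴ * V = 1)
    {r s : n → ℝ} (hr : ∀ i, 0 ≤ r i) (hs : ∀ i, 0 ≤ s i) {t : ℝ} (ht : 0 < t)
    (X : Matrix n n ℂ) :
    kosakiForm (unitaryDiag U r) (unitaryDiag V s) t X ≤ kosakiSup U V r s t := by
  have hX : X = V * (Vᴴ * X * U) * Uᴴ := by
    calc X = (V * Vᴴ) * X * (U * Uᴴ) := by
          rw [mul_eq_one_comm.mp hU, mul_eq_one_comm.mp hV]; simp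
      _ = _ := by simp only [Matrix.mul_assoc]
  rw [hX, kosakiForm_eq hU hV]
  exact Finset.sum_le_sum fun j _ => Finset.sum_le_sum fun i _ =>
    quadratic_le (add_nonneg (hs j) (mul_nonneg ht.le (hr i)))
      (add_mul_eq_zero_right (hr i) (hs j) ht)

/-- The maximizer of `kosakiForm`. -/
noncomputable def kosakiOpt (U V : Matrix n n ℂ) (r s : n → ℝ) (t : ℝ) : Matrix n n ℂ :=
  V * of (fun j i => ((r i / (s j + t * r i) : ℝ) : ℂ) * (Vᴴ * U) j i) * Uᴴ

theorem kosakiForm_kosakiOpt {U V : Matrix n n ℂ} (hU : Uᴴ * U = 1) (hV : Vᴴ * V = 1)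
    {r s : n → ℝ} (hr : ∀ i, 0 ≤ r i) (hs : ∀ i, 0 ≤ s i) {t : ℝ} (ht : 0 < t) :
    kosakiForm (unitaryDiag U r) (unitaryDiag V s) t (kosakiOpt U V r s t) =
      kosakiSup U V r s t := by
  rw [kosakiOpt, kosakiForm_eq hU hV]
  exact Finset.sum_congr rfl fun j _ => Finset.sum_congr rfl fun i _ =>
    quadratic_eq (add_mul_eq_zero_right (hr i) (hs j) ht)

theorem unitaryDiag_mul {U : Matrix n n ℂ} (hU : Uᴴ * U = 1) (r s : n → ℝ) :
    unitaryDiag U r * unitaryDiag U s = unitaryDiag U (fun i => r i * s i) := by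
  calc _ = U * diagonal (fun i => (r i : ℂ)) * (Uᴴ * U) * diagonal (fun i => (s i : ℂ)) * Uᴴ := by
        simp only [unitaryDiag, Matrix.mul_assoc]
    _ = _ := by
        rw [hU, Matrix.mul_one, Matrix.mul_assoc U, diagonal_mul_diagonal]
        simp [unitaryDiag]

theorem unitaryDiag_eval_mem {B : StarSubalgebra ℂ (Matrix n n ℂ)} {U : Matrix n n ℂ}
    (hU : Uᴴ * U = 1) {r : n → ℝ} (h : unitaryDiag U r ∈ B) (p : Polynomial ℝ) :
    unitaryDiag U (fun i => p.eval (r i)) ∈ B := by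
  induction p using Polynomial.induction_on' with
  | add p q hp hq =>
    convert B.add_mem hp hq using 1
    simp [unitaryDiag, ← Matrix.add_mul, ← Matrix.mul_add]
  | monomial k a =>
    induction k with
    | zero =>
      convert B.algebraMap_mem (a : ℂ) using 1
      have : diagonal (fun _ : n => (a : ℂ)) = (a : ℂ) • (1 : Matrix n n ℂ) := by
        rw [smul_one_eq_diagonal]
      simp [unitaryDiag, this, Algebra.algebraMap_eq_smul_one, mul_eq_one_comm.mp hU]
    | succ k ih =>
      convert B.mul_mem ih h using 1
      rw [unitaryDiag_mul hU]
      simp [pow_succ, mul_assoc]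

theorem unitaryDiag_comp_mem {B : StarSubalgebra ℂ (Matrix n n ℂ)} {U : Matrix n n ℂ}
    (hU : Uᴴ * U = 1) {r : n → ℝ} (h : unitaryDiag U r ∈ B) (f : ℝ → ℝ) :
    unitaryDiag U (fun i => f (r i)) ∈ B := by
  convert unitaryDiag_eval_mem hU h (Lagrange.interpolate (Finset.univ.image r) id f) using 3
    with i
  exact (Lagrange.eval_interpolate_at_node f (Set.injOn_id _)
    (Finset.mem_image_of_mem r (Finset.mem_univ i))).symm

theorem kosakiOpt_mem {B : StarSubalgebra ℂ (Matrix n n ℂ)} {U V : Matrix n n ℂ}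
    (hU : Uᴴ * U = 1) (hV : Vᴴ * V = 1) {r s : n → ℝ} (hr : unitaryDiag U r ∈ B)
    (hs : unitaryDiag V s ∈ B) (t : ℝ) : kosakiOpt U V r s t ∈ B := by
  have key : kosakiOpt U V r s t = ∑ c ∈ Finset.univ.image r,
      unitaryDiag V (fun j => c / (s j + t * c)) *
        unitaryDiag U (fun i => if r i = c then 1 else 0) := by
    have e : ∀ c, unitaryDiag V (fun j => c / (s j + t * c)) *
        unitaryDiag U (fun i => if r i = c then 1 else 0) =
        V * (diagonal (fun j => ((c / (s j + t * c) : ℝ) : ℂ)) * (Vᴴ * U) *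
          diagonal (fun i => (((if r i = c then 1 else 0 : ℝ)) : ℂ))) * Uᴴ := by
      intro c
      simp only [unitaryDiag, Matrix.mul_assoc]
    simp only [e]
    rw [← Matrix.sum_mul, ← Matrix.mul_sum, kosakiOpt]
    congr 2
    ext j i
    rw [Matrix.sum_apply, Finset.sum_eq_single (r i)]
    · rw [mul_diagonal, diagonal_mul]
      simp
    · intro c _ hc
      rw [mul_diagonal]
      simp [hc.symm]
    · intro h
      exact absurd (Finset.mem_image_of_mem r (Finset.mem_univ i)) h
  rw [key]
  exact B.sum_mem fun c _ => B.mul_mem (unitaryDiag_comp_mem hV hs (fun x => c / (x + t * c)))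
    (unitaryDiag_comp_mem hU hr (fun x => if x = c then 1 else 0))

theorem kosakiSup_le {B : StarSubalgebra ℂ (Matrix n n ℂ)} {U V U₀ V₀ : Matrix n n ℂ}
    (hU : Uᴴ * U = 1) (hV : Vᴴ * V = 1) (hU₀ : U₀ᴴ * U₀ = 1) (hV₀ : V₀ᴴ * V₀ = 1)
    {r s r₀ s₀ : n → ℝ} (hr : ∀ i, 0 ≤ r i) (hs : ∀ i, 0 ≤ s i)
    (hr₀ : ∀ i, 0 ≤ r₀ i) (hs₀ : ∀ i, 0 ≤ s₀ i)
    (hrB : unitaryDiag U₀ r₀ ∈ B) (hsB : unitaryDiag V₀ s₀ ∈ B)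
    (hρ : ∀ b ∈ B, (unitaryDiag U₀ r₀ * b).trace = (unitaryDiag U r * b).trace)
    (hσ : ∀ b ∈ B, (unitaryDiag V₀ s₀ * b).trace = (unitaryDiag V s * b).trace)
    {t : ℝ} (ht : 0 < t) : kosakiSup U₀ V₀ r₀ s₀ t ≤ kosakiSup U V r s t := by
  have hX := kosakiOpt_mem hU₀ hV₀ hrB hsB t
  have hX' : (kosakiOpt U₀ V₀ r₀ s₀ t)ᴴ ∈ B := star_mem hX
  rw [← kosakiForm_kosakiOpt hU₀ hV₀ hr₀ hs₀ ht]
  refine le_trans (le_of_eq ?_)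
    (kosakiForm_le_kosakiSup hU hV hr hs ht (kosakiOpt U₀ V₀ r₀ s₀ t))
  rw [kosakiForm, kosakiForm, hρ _ hX, hρ _ (B.mul_mem hX' hX), hσ _ (B.mul_mem hX hX')]

theorem sum_overlap {U V : Matrix n n ℂ} (hU : Uᴴ * U = 1) (hV : Vᴴ * V = 1) (i : n) :
    ∑ j, overlap U V j i = 1 := by
  have h : (Vᴴ * U)ᴴ * (Vᴴ * U) = 1 := by
    calc _ = Uᴴ * (V * Vᴴ) * U := by simp [Matrix.mul_assoc]
      _ = 1 := by rw [mul_eq_one_comm.mp hV, Matrix.mul_one, hU]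
  have h2 := conjTranspose_mul_self_apply_re (Vᴴ * U) i
  rw [h] at h2
  simpa [overlap] using h2.symm

theorem trace_unitaryDiag_mul_unitaryDiag (U V : Matrix n n ℂ) (r s : n → ℝ) :
    (unitaryDiag U r * unitaryDiag V s).trace.re = ∑ j, ∑ i, overlap U V j i * (r i * s j) := by
  rw [trace_unitaryDiag_mul, Finset.sum_comm]
  refine Finset.sum_congr rfl fun i _ => ?_
  have e : Uᴴ * unitaryDiag V s * U =
      (Vᴴ * U)ᴴ * (diagonal (fun i => (s i : ℂ)) * (Vᴴ * U)) := by
    simp [unitaryDiag, Matrix.mul_assoc]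
  rw [e, mul_apply, Complex.re_sum, Finset.mul_sum]
  refine Finset.sum_congr rfl fun j _ => ?_
  rw [diagonal_mul, conjTranspose_apply, overlap, Complex.normSq_apply]
  simp only [Complex.star_def, Complex.mul_re, Complex.mul_im, Complex.conj_re, Complex.conj_im,
    Complex.ofReal_re, Complex.ofReal_im]
  ring

theorem trace_unitaryDiag {U : Matrix n n ℂ} (hU : Uᴴ * U = 1) (r : n → ℝ) :
    (unitaryDiag U r).trace.re = ∑ i, r i := by
  have := trace_unitaryDiag_mul U r 1
  simpa [hU] using this

theorem conjTranspose_eigenvectorUnitary_mul_self {ρ : Matrix n n ℂ} (h : ρ.IsHermitian) :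
    (h.eigenvectorUnitary : Matrix n n ℂ)ᴴ * (h.eigenvectorUnitary : Matrix n n ℂ) = 1 :=
  Unitary.coe_star_mul_self _

theorem unitaryDiag_eigenvalues {ρ : Matrix n n ℂ} (h : ρ.IsHermitian) :
    unitaryDiag (h.eigenvectorUnitary : Matrix n n ℂ) h.eigenvalues = ρ := by
  conv_rhs => rw [h.spectral_theorem]
  rw [Unitary.conjStarAlgAut_apply]
  rfl

theorem matLog2_eq_unitaryDiag {ρ : Matrix n n ℂ} (h : ρ.IsHermitian) :
    matLog2 ρ = unitaryDiag (h.eigenvectorUnitary : Matrix n n ℂ)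
      (fun i => Real.logb 2 (h.eigenvalues i)) := by
  rw [matLog2, dif_pos h]
  rfl

theorem qRelEnt_eq_overlapEnt {ρ σ : Matrix n n ℂ} (hρ : ρ.IsHermitian) (hσ : σ.IsHermitian) :
    qRelEnt ρ σ = overlapEnt hρ.eigenvectorUnitary hσ.eigenvectorUnitary
      hρ.eigenvalues hσ.eigenvalues / Real.log 2 := by
  have hU := conjTranspose_eigenvectorUnitary_mul_self hρ
  have hV := conjTranspose_eigenvectorUnitary_mul_self hσ
  rw [qRelEnt, matLog2_eq_unitaryDiag hρ, matLog2_eq_unitaryDiag hσ, Matrix.mul_sub, trace_sub,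
    Complex.sub_re]
  have e : ∀ M, ρ * M = unitaryDiag (hρ.eigenvectorUnitary : Matrix n n ℂ) hρ.eigenvalues * M :=
    fun M => by rw [unitaryDiag_eigenvalues]
  rw [e, e, unitaryDiag_mul hU, trace_unitaryDiag hU, trace_unitaryDiag_mul_unitaryDiag, overlapEnt]
  have e : ∀ i, hρ.eigenvalues i * Real.logb 2 (hρ.eigenvalues i) =
      ∑ j, overlap (hρ.eigenvectorUnitary : Matrix n n ℂ) hσ.eigenvectorUnitary j i *
        (hρ.eigenvalues i * Real.logb 2 (hρ.eigenvalues i)) := by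
    intro i
    rw [← Finset.sum_mul, sum_overlap hU hV, one_mul]
  rw [Finset.sum_congr rfl fun i _ => e i, Finset.sum_comm, ← Finset.sum_sub_distrib,
    Finset.sum_div]
  refine Finset.sum_congr rfl fun j _ => ?_
  rw [← Finset.sum_sub_distrib, Finset.sum_div]
  refine Finset.sum_congr rfl fun i _ => ?_
  simp only [Real.logb]
  ring

theorem sum_overlap_mul_eigenvalues {ρ σ : Matrix n n ℂ} (hρ : ρ.IsHermitian)
    (hσ : σ.IsHermitian) (h1 : ρ.trace = 1) :
    ∑ j, ∑ i, overlap (hρ.eigenvectorUnitary : Matrix n n ℂ) hσ.eigenvectorUnitary j i *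
      hρ.eigenvalues i = 1 := by
  have hU := conjTranspose_eigenvectorUnitary_mul_self hρ
  have hV := conjTranspose_eigenvectorUnitary_mul_self hσ
  rw [Finset.sum_comm]
  simp only [← Finset.sum_mul, sum_overlap hU hV, one_mul]
  rw [← trace_unitaryDiag hU, unitaryDiag_eigenvalues, h1, Complex.one_re]

theorem SuppLe.eigenvalues_mul_overlap {ρ σ : Matrix n n ℂ} (h : SuppLe ρ σ)
    (hρ : ρ.IsHermitian) (hσ : σ.IsHermitian) (j i : n) (hj : hσ.eigenvalues j = 0) :
    hρ.eigenvalues i *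
      overlap (hρ.eigenvectorUnitary : Matrix n n ℂ) hσ.eigenvectorUnitary j i = 0 := by
  have hU := conjTranspose_eigenvectorUnitary_mul_self hρ
  set U := (hρ.eigenvectorUnitary : Matrix n n ℂ) with hUdef
  set V := (hσ.eigenvectorUnitary : Matrix n n ℂ) with hVdef
  have h0 : ρ *ᵥ (V *ᵥ Pi.single j 1) = 0 := by
    apply h
    rw [hVdef, hσ.eigenvectorUnitary_mulVec, hσ.mulVec_eigenvectorBasis, hj, zero_smul]
  have h1 : Uᴴ * ρ * V = diagonal (fun i => (hρ.eigenvalues i : ℂ)) * (Uᴴ * V) := by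
    conv_lhs => rw [← unitaryDiag_eigenvalues hρ, unitaryDiag, ← hUdef]
    rw [← Matrix.mul_assoc, ← Matrix.mul_assoc, hU]
    simp [Matrix.mul_assoc]
  have h2 : (Uᴴ * ρ * V) *ᵥ Pi.single j 1 = 0 := by
    rw [Matrix.mul_assoc, ← mulVec_mulVec, ← mulVec_mulVec, h0, mulVec_zero]
  have h3 := congrFun h2 i
  rw [h1, mulVec_single_one] at h3
  simp only [col_apply, diagonal_mul, Pi.zero_apply] at h3
  have h4 : (Vᴴ * U) j i = star ((Uᴴ * V) i j) := by
    rw [← conjTranspose_apply, conjTranspose_mul, conjTranspose_conjTranspose]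
  rw [overlap, h4]
  rcases _root_.mul_eq_zero.mp h3 with h | h
  · rw [Complex.ofReal_eq_zero.mp h, zero_mul]
  · rw [h]; simp

open scoped MatrixOrder Matrix.Norms.L2Operator in
theorem Matrix.PosSemidef.mul_eq_zero_of_trace {ρ P : Matrix n n ℂ} (hρ : ρ.PosSemidef)
    (hP : Pᴴ = P) (hPP : P * P = P) (h : (ρ * P).trace = 0) : ρ * P = 0 := by
  obtain ⟨A, rfl⟩ := CStarAlgebra.nonneg_iff_eq_star_mul_self.mp hρ.nonneg
  have h1 : ((A * P)ᴴ * (A * P)).trace = 0 := by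
    rw [conjTranspose_mul, hP, Matrix.mul_assoc, trace_mul_comm, Matrix.mul_assoc,
      Matrix.mul_assoc, hPP, ← Matrix.mul_assoc]
    exact h
  rw [trace_conjTranspose_mul_self_eq_zero_iff] at h1
  rw [Matrix.mul_assoc, h1, Matrix.mul_zero]

theorem suppLe_restrict {B : StarSubalgebra ℂ (Matrix n n ℂ)} {ρ σ ρ₀ σ₀ : Matrix n n ℂ}
    (hσ : σ.PosSemidef) (hρ₀ : ρ₀.PosSemidef) (hσ₀ : σ₀.IsHermitian) (hσB : σ₀ ∈ B)
    (hρtr : ∀ b ∈ B, (ρ₀ * b).trace = (ρ * b).trace)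
    (hσtr : ∀ b ∈ B, (σ₀ * b).trace = (σ * b).trace) (h : SuppLe ρ σ) : SuppLe ρ₀ σ₀ := by
  have hV := conjTranspose_eigenvectorUnitary_mul_self hσ₀
  have hd := unitaryDiag_eigenvalues hσ₀
  set V := (hσ₀.eigenvectorUnitary : Matrix n n ℂ)
  set s := hσ₀.eigenvalues
  set P := unitaryDiag V (fun i => if s i = 0 then 1 else 0) with hPdef
  have hPB : P ∈ B :=
    unitaryDiag_comp_mem hV (hd.symm ▸ hσB) (fun x => if x = 0 then 1 else 0)
  have hPP : P * P = P := by
    rw [hPdef, unitaryDiag_mul hV]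
    congr 1
    ext i
    split_ifs <;> simp
  have hP : Pᴴ = P := by
    simp only [hPdef, unitaryDiag, conjTranspose_mul, conjTranspose_conjTranspose,
      diagonal_conjTranspose, Matrix.mul_assoc]
    congr 3
    ext i
    simp
  have h0 : σ₀ * P = 0 := by
    rw [← hd, hPdef, unitaryDiag_mul hV]
    have : (fun i => s i * if s i = 0 then 1 else 0) = 0 := by
      ext i
      by_cases hi : s i = 0 <;> simp [hi]
    rw [this]
    simp [unitaryDiag]
  have h1 : σ * P = 0 := hσ.mul_eq_zero_of_trace hP hPP (by rw [← hσtr P hPB, h0, trace_zero])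
  have h2 : ρ₀ * P = 0 := hρ₀.mul_eq_zero_of_trace hP hPP
    (by rw [hρtr P hPB, h.mul_eq_zero h1, trace_zero])
  intro v hv
  have h3 : unitaryDiag V (fun i => (s i)⁻¹) * σ₀ = 1 - P := by
    rw [← hd, unitaryDiag_mul hV, hPdef, eq_sub_iff_add_eq, ← mul_eq_one_comm.mp hV, unitaryDiag,
      unitaryDiag, ← Matrix.add_mul, ← Matrix.mul_add, diagonal_add]
    have : (diagonal fun i => (((s i)⁻¹ * s i : ℝ) : ℂ) + ((if s i = 0 then 1 else 0 : ℝ) : ℂ)) =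
        (1 : Matrix n n ℂ) := by
      rw [← diagonal_one]
      congr 1
      ext i
      by_cases hi : s i = 0 <;> simp [hi]
    rw [this, Matrix.mul_one]
  have h4 : v = P *ᵥ v := by
    have : (1 - P) *ᵥ v = 0 := by rw [← h3, ← mulVec_mulVec, hv, mulVec_zero]
    rwa [sub_mulVec, one_mulVec, sub_eq_zero] at this
  rw [h4, mulVec_mulVec, h2, zero_mulVec]

end

/-- Monotonicity of the relative entropy under restriction to a unital *-subalgebra `B`
of a matrix algebra: `S(ψ↾B, φ↾B) ≤ S(ψ, φ)`, where the restricted states are represented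
by their densities `DψB, DφB ∈ B` with respect to the ambient trace. -/
theorem rel_entropy_monotone_subalgebra (d : ℕ)
    (B : StarSubalgebra ℂ (Matrix (Fin d) (Fin d) ℂ))
    (Dψ Dφ DψB DφB : Matrix (Fin d) (Fin d) ℂ)
    (hDψ : IsDensity Dψ) (hDφ : IsDensity Dφ)
    (hDψB : IsDensity DψB) (hDφB : IsDensity DφB)
    (hψmem : DψB ∈ B) (hφmem : DφB ∈ B)
    (hψ : ∀ b ∈ B, (DψB * b).trace = (Dψ * b).trace)
    (hφ : ∀ b ∈ B, (DφB * b).trace = (Dφ * b).trace) :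
    qRelEntE DψB DφB ≤ qRelEntE Dψ Dφ := by
  by_cases h : SuppLe Dψ Dφ
  · have h₀ : SuppLe DψB DφB :=
      suppLe_restrict hDφ.1 hDψB.1 hDφB.1.isHermitian hφmem hψ hφ h
    rw [qRelEntE, qRelEntE, if_pos h, if_pos h₀, EReal.coe_le_coe_iff]
    have a := hDψ.1.isHermitian
    have b := hDφ.1.isHermitian
    have a₀ := hDψB.1.isHermitian
    have b₀ := hDφB.1.isHermitian
    rw [qRelEnt_eq_overlapEnt a b, qRelEnt_eq_overlapEnt a₀ b₀]
    refine div_le_div_of_nonneg_right ?_ (Real.log_nonneg one_le_two)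
    refine overlapEnt_le hDψ.1.eigenvalues_nonneg hDφ.1.eigenvalues_nonneg
      hDψB.1.eigenvalues_nonneg hDφB.1.eigenvalues_nonneg (h.eigenvalues_mul_overlap a b)
      (h₀.eigenvalues_mul_overlap a₀ b₀) (sum_overlap_mul_eigenvalues a b hDψ.2)
      (sum_overlap_mul_eigenvalues a₀ b₀ hDψB.2) fun t ht => ?_
    refine kosakiSup_le (B := B) (conjTranspose_eigenvectorUnitary_mul_self a)
      (conjTranspose_eigenvectorUnitary_mul_self b)
      (conjTranspose_eigenvectorUnitary_mul_self a₀)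
      (conjTranspose_eigenvectorUnitary_mul_self b₀)
      hDψ.1.eigenvalues_nonneg hDφ.1.eigenvalues_nonneg
      hDψB.1.eigenvalues_nonneg hDφB.1.eigenvalues_nonneg ?_ ?_ ?_ ?_ ht
    · rwa [unitaryDiag_eigenvalues]
    · rwa [unitaryDiag_eigenvalues]
    · rwa [unitaryDiag_eigenvalues, unitaryDiag_eigenvalues]
    · rwa [unitaryDiag_eigenvalues, unitaryDiag_eigenvalues]
  · rw [qRelEntE, qRelEntE, if_neg h]
    exact le_top
end
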